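/- Let d ≥ 1 and let n ≥ 1, k ≥ 1 be natural numbers with n > d or k > d. Then pB(n,k)_{≤d} = ∑ C(n; n_1, n_2) · C(k; k_1, k_2) · pB(n − (n_1+n_2), k − (k_1+k_2))_{≤d}, where the sum is over all n_1, n_2, k_1, k_2 ∈ {1, 2, …, d}, C(n; n_1, n_2) = n!/(n_1! n_2! (n−n_1−n_2)!) denotes the multinomial coefficient, and any summand with n_1 + n_2 > n or k_1 + k_2 > k is taken to be 0. -/

import Mathlib

open Finset

/-- A 01 matrix (encoded with `Bool` entries) is lonesum iff it avoids the
two 2×2 permutation submatrices. -/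
def Lonesum {n k : ℕ} (M : Fin n → Fin k → Bool) : Prop :=
  ∀ i i' : Fin n, ∀ j j' : Fin k, i < i' → j < j' →
    ¬(M i j = true ∧ M i j' = false ∧ M i' j = false ∧ M i' j' = true) ∧
    ¬(M i j = false ∧ M i j' = true ∧ M i' j = true ∧ M i' j' = false)

/-- The `j`-th column of a 01 matrix. -/
def colOf {n k : ℕ} (M : Fin n → Fin k → Bool) (j : Fin k) : Fin n → Bool :=
  fun i => M i j

/-- The `i`-th row of a 01 matrix. -/
def rowOf {n k : ℕ} (M : Fin n → Fin k → Bool) (i : Fin n) : Fin k → Bool :=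
  fun j => M i j

/-- `pB(n,k)_{≤d}`: the number of `n × k` lonesum 01 matrices with no all-zero
column and no all-zero row, in which every column vector occurs at most `d`
times among the columns and every row vector occurs at most `d` times among
the rows. -/
noncomputable def pB (n k d : ℕ) : ℕ :=
  Nat.card {M : Fin n → Fin k → Bool // Lonesum M ∧
    (∀ j, ∃ i, M i j = true) ∧ (∀ i, ∃ j, M i j = true) ∧
    (∀ j, (univ.filter fun j' => colOf M j' = colOf M j).card ≤ d) ∧
    (∀ i, (univ.filter fun i' => rowOf M i' = rowOf M i).card ≤ d)}

/-!
In a lonesum matrix the supports of the columns form a chain, so the columns of smallest support are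
supported exactly on the all-one rows; there is such a row because no column vanishes. Deleting the
`n₁ ≥ 1` all-one rows and the `k₁ ≥ 1` columns of smallest support leaves a matrix of the same kind,
since two surviving rows (or columns) are equal afterwards exactly when they were equal before.
Conversely, the smaller matrix and the deleted positions determine the original matrix. Hence
`pB(n,k) = ∑ C(n,n₁) · C(k,k₁) · pB(n-n₁,k-k₁)` over `1 ≤ n₁, k₁ ≤ d` whenever `(n,k) ≠ (0,0)`, and
the recursion is this identity applied twice: as `n > d` or `k > d`, the matrix is not exhausted
after the first step.
-/

section Ferrers

variable {α β : Type*}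

/-- A 01 matrix is Ferrers if the supports of its rows (equivalently, of its columns) form a chain;
this is lonesumness freed from the linear orders on the index types. -/
def IsFerrers (M : α → β → Bool) : Prop :=
  ∀ ⦃i i' j j'⦄, M i j → M i' j' → M i j' ∨ M i' j

lemma lonesum_iff_isFerrers {n k : ℕ} (M : Fin n → Fin k → Bool) :
    Lonesum M ↔ IsFerrers M := by
  refine ⟨fun h i i' j j' hij hij' => ?_, fun h i i' j j' _ _ => ⟨?_, ?_⟩⟩
  · by_contra! hc
    obtain ⟨hc, hc'⟩ := hc
    rw [ne_eq, Bool.not_eq_true] at hc hc'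
    have hi : i ≠ i' := by rintro rfl; simp_all
    have hj : j ≠ j' := by rintro rfl; simp_all
    rcases hi.lt_or_gt with hi | hi <;> rcases hj.lt_or_gt with hj | hj
    · exact (h i i' j j' hi hj).1 ⟨hij, hc, hc', hij'⟩
    · exact (h i i' j' j hi hj).2 ⟨hc, hij, hij', hc'⟩
    · exact (h i' i j j' hi hj).2 ⟨hc', hij', hij, hc⟩
    · exact (h i' i j' j hi hj).1 ⟨hij', hc', hc, hij⟩
  · rintro ⟨hij, hij', hi'j, hi'j'⟩
    simpa [hij', hi'j] using h hij hi'j'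
  · rintro ⟨hij, hij', hi'j, hi'j'⟩
    simpa [hij, hi'j'] using h hij' hi'j

variable [Fintype α] [Fintype β]

/-- The matrices counted by `pB`, over arbitrary finite index types. -/
structure IsRestrictedLonesum (d : ℕ) (M : α → β → Bool) : Prop where
  isFerrers : IsFerrers M
  col_ne_zero : ∀ j, ∃ i, M i j
  row_ne_zero : ∀ i, ∃ j, M i j
  card_col_le : ∀ j, #{j' | (M · j') = (M · j)} ≤ d
  card_row_le : ∀ i, #{i' | M i' = M i} ≤ d

lemma pB_eq_natCard (n k d : ℕ) :
    pB n k d = Nat.card {M : Fin n → Fin k → Bool // IsRestrictedLonesum d M} := by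
  refine Nat.card_congr (Equiv.subtypeEquivRight fun M => ?_)
  rw [lonesum_iff_isFerrers]
  exact ⟨fun ⟨hf, hc, hr, hcd, hrd⟩ => ⟨hf, hc, hr, hcd, hrd⟩,
    fun ⟨hf, hc, hr, hcd, hrd⟩ => ⟨hf, hc, hr, hcd, hrd⟩⟩

end Ferrers

section Reindex

variable {α β α' β' : Type*} [Fintype α] [Fintype β] [Fintype α'] [Fintype β'] {d : ℕ}
  {M : α → β → Bool}

lemma IsRestrictedLonesum.reindex (h : IsRestrictedLonesum d M) (e : α' ≃ α) (f : β' ≃ β) :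
    IsRestrictedLonesum d fun i j => M (e i) (f j) where
  isFerrers _ _ _ _ hij hij' := h.isFerrers hij hij'
  col_ne_zero j := e.surjective.exists.1 (h.col_ne_zero (f j))
  row_ne_zero i := f.surjective.exists.1 (h.row_ne_zero (e i))
  card_col_le j := by
    refine (card_equiv f fun j' => ?_).trans_le (h.card_col_le (f j))
    simp [funext_iff, e.forall_congr_left]
  card_row_le i := by
    refine (card_equiv e fun i' => ?_).trans_le (h.card_row_le (e i))
    simp [funext_iff, f.forall_congr_left]

lemma card_isRestrictedLonesum (α β : Type*) [Fintype α] [Fintype β] (d : ℕ) :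
    Nat.card {M : α → β → Bool // IsRestrictedLonesum d M} =
      pB (Fintype.card α) (Fintype.card β) d := by
  let e := Fintype.equivFin α
  let f := Fintype.equivFin β
  rw [pB_eq_natCard]
  let reindexEquiv := e.arrowCongr (f.arrowCongr (.refl Bool))
  refine Nat.card_congr (reindexEquiv.subtypeEquiv fun M => ⟨fun h => ?_, fun h => ?_⟩)
  · exact h.reindex e.symm f.symm
  · simpa [reindexEquiv] using h.reindex e f

end Reindex

section Deletion

variable {α β : Type*} {A : Finset α} {B : Finset β}

/-- The submatrix obtained by deleting the rows `A` and the columns `B`. -/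
abbrev deleteLines (M : α → β → Bool) (A : Finset α) (B : Finset β) :
    {i // i ∉ A} → {j // j ∉ B} → Bool :=
  fun i j => M i j

variable [DecidableEq α] [DecidableEq β]

/-- The 01 matrix with ones in the rows `A`, zeros in the remaining positions of the columns `B`,
and the entries of `N` elsewhere. It is the inverse construction to deleting `fullRows` and
`minCols`. -/
def bordered (A : Finset α) (B : Finset β) (N : {i // i ∉ A} → {j // j ∉ B} → Bool) :
    α → β → Bool :=
  fun i j => if hi : i ∈ A then true else if hj : j ∈ B then false else N ⟨i, hi⟩ ⟨j, hj⟩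

lemma deleteLines_bordered (N : {i // i ∉ A} → {j // j ∉ B} → Bool) :
    deleteLines (bordered A B N) A B = N := by
  ext i j
  simp [bordered, i.2, j.2]

end Deletion

section Peeling

variable {α β : Type*} [Fintype α] [Fintype β] {d : ℕ} {M : α → β → Bool}

/-- The indices of the all-one rows of a 01 matrix. -/
def fullRows (M : α → β → Bool) : Finset α := {i | ∀ j, M i j = true}

/-- The columns supported on the all-one rows. For a nonempty lonesum matrix these are the columns
of smallest support. -/
def minCols (M : α → β → Bool) : Finset β :=
  {j | ∀ i, M i j = true → ∀ j', M i j' = true}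

lemma mem_fullRows {i : α} : i ∈ fullRows M ↔ ∀ j, M i j := by
  simp [fullRows]

lemma mem_minCols {j : β} : j ∈ minCols M ↔ ∀ i, M i j → i ∈ fullRows M := by
  simp [minCols, mem_fullRows]

lemma apply_iff_mem_fullRows {j : β} (hj : j ∈ minCols M) (i : α) : M i j ↔ i ∈ fullRows M :=
  ⟨mem_minCols.1 hj i, fun hi => mem_fullRows.1 hi j⟩

lemma IsFerrers.minCols_nonempty [Nonempty β] (h : IsFerrers M) : (minCols M).Nonempty := by
  obtain ⟨j, -, hmin⟩ := Set.finite_univ.exists_minimalFor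
    (fun j => {i | M i j}) (Set.univ : Set β) Set.univ_nonempty
  refine ⟨j, mem_minCols.2 fun i hij => mem_fullRows.2 fun j' => ?_⟩
  by_contra hij'
  have hsub : {i' | M i' j'} ⊆ {i' | M i' j} := fun i' hi' => (h hij hi').resolve_left hij'
  exact hij' (hmin (Set.mem_univ j') hsub hij)

lemma row_eq_iff_mem_fullRows {i i' : α} (hi : i ∈ fullRows M) :
    M i' = M i ↔ i' ∈ fullRows M := by
  simp [funext_iff, mem_fullRows, mem_fullRows.1 hi]

lemma col_eq_iff_mem_minCols {j j' : β} (hj : j ∈ minCols M) :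
    (M · j') = (M · j) ↔ j' ∈ minCols M := by
  refine ⟨fun h => mem_minCols.2 fun i hij' => ?_, fun hj' => funext fun i => ?_⟩
  · exact mem_minCols.1 hj i (congrFun h i ▸ hij')
  · rw [Bool.eq_iff_iff, apply_iff_mem_fullRows hj, apply_iff_mem_fullRows hj']

lemma card_row_eq_card_fullRows {i : α} (hi : i ∈ fullRows M) :
    #{i' | M i' = M i} = #(fullRows M) :=
  congrArg card (by ext i'; rw [mem_filter_univ, row_eq_iff_mem_fullRows hi])

lemma card_col_eq_card_minCols {j : β} (hj : j ∈ minCols M) :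
    #{j' | (M · j') = (M · j)} = #(minCols M) :=
  congrArg card (by ext j'; rw [mem_filter_univ, col_eq_iff_mem_minCols hj])

lemma IsRestrictedLonesum.minCols_nonempty (h : IsRestrictedLonesum d M)
    (hne : Nonempty α ∨ Nonempty β) : (minCols M).Nonempty := by
  have : Nonempty β := hne.elim (fun ⟨i⟩ => ⟨(h.row_ne_zero i).choose⟩) id
  exact h.isFerrers.minCols_nonempty

lemma IsRestrictedLonesum.card_minCols_mem_Icc (h : IsRestrictedLonesum d M)
    (hne : Nonempty α ∨ Nonempty β) : #(minCols M) ∈ Icc 1 d := by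
  obtain ⟨j, hj⟩ := h.minCols_nonempty hne
  exact mem_Icc.2 ⟨card_pos.2 ⟨j, hj⟩, card_col_eq_card_minCols hj ▸ h.card_col_le j⟩

lemma IsRestrictedLonesum.card_fullRows_mem_Icc (h : IsRestrictedLonesum d M)
    (hne : Nonempty α ∨ Nonempty β) : #(fullRows M) ∈ Icc 1 d := by
  obtain ⟨j, hj⟩ := h.minCols_nonempty hne
  obtain ⟨i, hij⟩ := h.col_ne_zero j
  have hi := mem_minCols.1 hj i hij
  exact mem_Icc.2 ⟨card_pos.2 ⟨i, hi⟩, card_row_eq_card_fullRows hi ▸ h.card_row_le i⟩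

/-- What is left of a 01 matrix after deleting its all-one rows and the columns supported on
them. -/
abbrev core (M : α → β → Bool) : {i // i ∉ fullRows M} → {j // j ∉ minCols M} → Bool :=
  deleteLines M (fullRows M) (minCols M)

lemma core_row_eq_iff {i i' : {i // i ∉ fullRows M}} :
    core M i' = core M i ↔ M i' = M i := by
  refine ⟨fun h => funext fun j => ?_, fun h => funext fun j => congrFun h j⟩
  by_cases hj : j ∈ minCols M
  · simp [Bool.eq_iff_iff, apply_iff_mem_fullRows hj, i.2, i'.2]
  · exact congrFun h ⟨j, hj⟩

lemma core_col_eq_iff {j j' : {j // j ∉ minCols M}} :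
    (core M · j') = (core M · j) ↔ (M · j') = (M · j) := by
  refine ⟨fun h => funext fun i => ?_, fun h => funext fun i => congrFun h i⟩
  by_cases hi : i ∈ fullRows M
  · simp [mem_fullRows.1 hi]
  · exact congrFun h ⟨i, hi⟩

lemma isFerrers_core_iff : IsFerrers (core M) ↔ IsFerrers M := by
  refine ⟨fun h i i' j j' hij hij' => ?_, fun h _ _ _ _ hij hij' => h hij hij'⟩
  by_cases hi : i ∈ fullRows M
  · exact .inl (mem_fullRows.1 hi j')
  by_cases hi' : i' ∈ fullRows M
  · exact .inr (mem_fullRows.1 hi' j)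
  have hj : j ∉ minCols M := fun hj => hi (mem_minCols.1 hj i hij)
  have hj' : j' ∉ minCols M := fun hj' => hi' (mem_minCols.1 hj' i' hij')
  exact @h ⟨i, hi⟩ ⟨i', hi'⟩ ⟨j, hj⟩ ⟨j', hj'⟩ hij hij'

variable [DecidableEq α] [DecidableEq β]

lemma card_core_row_eq (i : {i // i ∉ fullRows M}) :
    #{i' | core M i' = core M i} = #{i' | M i' = M i} := by
  rw [← card_map (Function.Embedding.subtype _)]
  congr 1
  ext i'
  have hi' (h : M i' = M i) : i' ∉ fullRows M :=
    fun hi' => i.2 ((row_eq_iff_mem_fullRows hi').1 h.symm)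
  simpa [core_row_eq_iff] using hi'

lemma card_core_col_eq (j : {j // j ∉ minCols M}) :
    #{j' | (core M · j') = (core M · j)} = #{j' | (M · j') = (M · j)} := by
  rw [← card_map (Function.Embedding.subtype _)]
  congr 1
  ext j'
  have hj' (h : (M · j') = (M · j)) : j' ∉ minCols M :=
    fun hj' => j.2 ((col_eq_iff_mem_minCols hj').1 h.symm)
  simpa [core_col_eq_iff] using hj'

variable {A : Finset α} {B : Finset β}

lemma isRestrictedLonesum_deleteLines (h : IsRestrictedLonesum d M) (hA : fullRows M = A)
    (hB : minCols M = B) : IsRestrictedLonesum d (deleteLines M A B) := by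
  subst hA hB
  refine ⟨isFerrers_core_iff.2 h.isFerrers, fun j => ?_, fun i => ?_,
    fun j => (card_core_col_eq j).trans_le (h.card_col_le j),
    fun i => (card_core_row_eq i).trans_le (h.card_row_le i)⟩
  · have hj := j.2
    simp only [mem_minCols, not_forall] at hj
    obtain ⟨i, hij, hi⟩ := hj
    exact ⟨⟨i, hi⟩, hij⟩
  · obtain ⟨j, hij⟩ := h.row_ne_zero i
    exact ⟨⟨j, fun hj => i.2 (mem_minCols.1 hj i hij)⟩, hij⟩

lemma isRestrictedLonesum_of_deleteLines (h : IsRestrictedLonesum d (deleteLines M A B))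
    (hA : fullRows M = A) (hB : minCols M = B) (hAd : #A ∈ Icc 1 d) (hBd : #B ∈ Icc 1 d) :
    IsRestrictedLonesum d M := by
  subst hA hB
  rw [mem_Icc, one_le_card] at hAd hBd
  refine ⟨isFerrers_core_iff.1 h.isFerrers, fun j => ?_, fun i => ?_, fun j => ?_, fun i => ?_⟩
  · obtain ⟨i, hi⟩ := hAd.1
    exact ⟨i, mem_fullRows.1 hi j⟩
  · by_cases hi : i ∈ fullRows M
    · obtain ⟨j, -⟩ := hBd.1
      exact ⟨j, mem_fullRows.1 hi j⟩
    · obtain ⟨j, hij⟩ := h.row_ne_zero ⟨i, hi⟩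
      exact ⟨j, hij⟩
  · by_cases hj : j ∈ minCols M
    · exact (card_col_eq_card_minCols hj).trans_le hBd.2
    · exact (card_core_col_eq ⟨j, hj⟩).symm.trans_le (h.card_col_le ⟨j, hj⟩)
  · by_cases hi : i ∈ fullRows M
    · exact (card_row_eq_card_fullRows hi).trans_le hAd.2
    · exact (card_core_row_eq ⟨i, hi⟩).symm.trans_le (h.card_row_le ⟨i, hi⟩)

lemma bordered_deleteLines (hA : fullRows M = A) (hB : minCols M = B) :
    bordered A B (deleteLines M A B) = M := by
  subst hA hB
  ext i j
  by_cases hi : i ∈ fullRows M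
  · simp [bordered, hi, mem_fullRows.1 hi j]
  by_cases hj : j ∈ minCols M
  · simpa [bordered, hi, hj] using mt (apply_iff_mem_fullRows hj i).1 hi
  · simp [bordered, hi, hj]

variable {N : {i // i ∉ A} → {j // j ∉ B} → Bool}

lemma fullRows_bordered (hB : B.Nonempty) : fullRows (bordered A B N) = A := by
  obtain ⟨j, hj⟩ := hB
  ext i
  refine ⟨fun hi => ?_, fun hi => mem_fullRows.2 fun j => by simp [bordered, hi]⟩
  by_contra hiA
  simpa [bordered, hiA, hj] using mem_fullRows.1 hi j

lemma minCols_bordered (hB : B.Nonempty) (hN : ∀ j, ∃ i, N i j) :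
    minCols (bordered A B N) = B := by
  ext j
  rw [mem_minCols, fullRows_bordered hB]
  refine ⟨fun h => ?_, fun hj i => ?_⟩
  · by_contra hj
    obtain ⟨i, hij⟩ := hN ⟨j, hj⟩
    exact i.2 (h i (by simpa [bordered, i.2, hj] using hij))
  · by_cases hi : i ∈ A <;> simp [bordered, hi, hj]

/-- Matrices with prescribed all-one rows `A` and minimal columns `B` correspond to matrices on the
complementary rows and columns. -/
def peelEquiv (hA : #A ∈ Icc 1 d) (hB : #B ∈ Icc 1 d) :
    {M : α → β → Bool // IsRestrictedLonesum d M ∧ fullRows M = A ∧ minCols M = B} ≃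
      {N : {i // i ∉ A} → {j // j ∉ B} → Bool // IsRestrictedLonesum d N} where
  toFun M := ⟨deleteLines M.1 A B, isRestrictedLonesum_deleteLines M.2.1 M.2.2.1 M.2.2.2⟩
  invFun N :=
    have hBne := one_le_card.1 (mem_Icc.1 hB).1
    have hrows := fullRows_bordered hBne
    have hcols := minCols_bordered hBne N.2.col_ne_zero
    have hN : IsRestrictedLonesum d (deleteLines (bordered A B N.1) A B) :=
      (deleteLines_bordered N.1).symm ▸ N.2
    ⟨bordered A B N.1, isRestrictedLonesum_of_deleteLines hN hrows hcols hA hB, hrows, hcols⟩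
  left_inv M := Subtype.ext (bordered_deleteLines M.2.2.1 M.2.2.2)
  right_inv N := Subtype.ext (deleteLines_bordered N.1)

end Peeling

section Counting

lemma card_isRestrictedLonesum_fullRows_eq_minCols_eq {α β : Type*} [Fintype α] [Fintype β]
    {d : ℕ} {A : Finset α} {B : Finset β} (hA : #A ∈ Icc 1 d) (hB : #B ∈ Icc 1 d) :
    Nat.card {M : α → β → Bool // IsRestrictedLonesum d M ∧ fullRows M = A ∧ minCols M = B} =
      pB (Fintype.card α - #A) (Fintype.card β - #B) d := by
  classical
  rw [Nat.card_congr (peelEquiv hA hB), card_isRestrictedLonesum]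
  simp

lemma sum_finset_card_mem {α R : Type*} [Fintype α] [AddCommMonoid R] (s : Finset ℕ) (f : ℕ → R) :
    ∑ A : Finset α with #A ∈ s, f #A = ∑ m ∈ s, (Fintype.card α).choose m • f m := by
  rw [← sum_fiberwise_of_maps_to (t := s) (g := card) (by simp)]
  refine sum_congr rfl fun m hm => ?_
  have hfiber : {A ∈ ({A | #A ∈ s} : Finset (Finset α)) | #A = m} = powersetCard m univ := by
    ext A
    simp +contextual [mem_powersetCard, hm]
  rw [hfiber, sum_powersetCard, card_univ]

lemma pB_eq_sum_finset {n k : ℕ} (d : ℕ) (h : 0 < n ∨ 0 < k) :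
    pB n k d = ∑ A : Finset (Fin n) with #A ∈ Icc 1 d, ∑ B : Finset (Fin k) with #B ∈ Icc 1 d,
      pB (n - #A) (k - #B) d := by
  classical
  have hne : Nonempty (Fin n) ∨ Nonempty (Fin k) := by
    simpa only [← Fin.pos_iff_nonempty] using h
  rw [pB_eq_natCard, Nat.card_eq_fintype_card, Fintype.card_subtype, ← sum_product',
    card_eq_sum_card_fiberwise (f := fun M : Fin n → Fin k → Bool => (fullRows M, minCols M))]
  · refine sum_congr rfl fun ⟨A, B⟩ hAB => ?_
    simp only [mem_product, mem_filter, mem_univ, true_and] at hAB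
    have hcard := card_isRestrictedLonesum_fullRows_eq_minCols_eq hAB.1 hAB.2
    rw [Fintype.card_fin, Fintype.card_fin] at hcard
    rw [← hcard, Nat.card_eq_fintype_card, Fintype.card_subtype, filter_filter]
    simp only [Prod.mk.injEq]
  · intro M hM
    have hM : IsRestrictedLonesum d M := by simpa using hM
    simpa using And.intro (hM.card_fullRows_mem_Icc hne) (hM.card_minCols_mem_Icc hne)

lemma pB_eq_sum_choose {n k : ℕ} (d : ℕ) (h : 0 < n ∨ 0 < k) :
    pB n k d = ∑ n₁ ∈ Icc 1 d, ∑ k₁ ∈ Icc 1 d,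
      n.choose n₁ * k.choose k₁ * pB (n - n₁) (k - k₁) d := by
  have hcols (a : ℕ) : ∑ B : Finset (Fin k) with #B ∈ Icc 1 d, pB (n - a) (k - #B) d =
      ∑ k₁ ∈ Icc 1 d, k.choose k₁ * pB (n - a) (k - k₁) d := by
    simpa using sum_finset_card_mem (α := Fin k) (Icc 1 d) fun b => pB (n - a) (k - b) d
  rw [pB_eq_sum_finset d h]
  simp only [hcols, mul_assoc, ← mul_sum]
  simpa using sum_finset_card_mem (α := Fin n) (Icc 1 d) fun a =>
    ∑ k₁ ∈ Icc 1 d, k.choose k₁ * pB (n - a) (k - k₁) d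

end Counting

/-- The recursion for restricted lonesum matrices: for `n, k ≥ 1` with
`n > d` or `k > d`,
`pB(n,k)_{≤d} = ∑ C(n;n₁,n₂)·C(k;k₁,k₂)·pB(n−(n₁+n₂),k−(k₁+k₂))_{≤d}`,
the sum being over `n₁,n₂,k₁,k₂ ∈ {1,…,d}`; here the multinomial coefficient
`C(n;n₁,n₂) = n!/(n₁!n₂!(n−n₁−n₂)!)` is expressed as
`C(n,n₁)·C(n−n₁,n₂)`, which also vanishes when `n₁+n₂ > n`. -/
theorem pB_recursion (n k d : ℕ) (hn : 1 ≤ n) (hk : 1 ≤ k) (hd : 1 ≤ d)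
    (h : d < n ∨ d < k) :
    pB n k d =
      ∑ n₁ ∈ Finset.Icc 1 d, ∑ n₂ ∈ Finset.Icc 1 d,
        ∑ k₁ ∈ Finset.Icc 1 d, ∑ k₂ ∈ Finset.Icc 1 d,
          (Nat.choose n n₁ * Nat.choose (n - n₁) n₂) *
            (Nat.choose k k₁ * Nat.choose (k - k₁) k₂) *
              pB (n - (n₁ + n₂)) (k - (k₁ + k₂)) d := by
  calc pB n k d
    _ = ∑ n₁ ∈ Icc 1 d, ∑ k₁ ∈ Icc 1 d,
          n.choose n₁ * k.choose k₁ * pB (n - n₁) (k - k₁) d :=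
      pB_eq_sum_choose d (by lia)
    _ = ∑ n₁ ∈ Icc 1 d, ∑ k₁ ∈ Icc 1 d, n.choose n₁ * k.choose k₁ *
          ∑ n₂ ∈ Icc 1 d, ∑ k₂ ∈ Icc 1 d,
            (n - n₁).choose n₂ * (k - k₁).choose k₂ * pB (n - n₁ - n₂) (k - k₁ - k₂) d := by
      refine sum_congr rfl fun n₁ hn₁ => sum_congr rfl fun k₁ hk₁ => ?_
      rw [mem_Icc] at hn₁ hk₁
      rw [← pB_eq_sum_choose d (by lia)]
    _ = _ := by
      refine sum_congr rfl fun n₁ _ => ?_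
      simp only [mul_sum, Nat.sub_sub]
      rw [sum_comm]
      exact sum_congr rfl fun n₂ _ => sum_congr rfl fun k₁ _ => sum_congr rfl fun k₂ _ => by ring
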